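/- For every ε > 0 there exists a unique representation basis A of the integers such that A(-x,x) ≥ (√2/2 − ε)·√x for infinitely many positive integers x. -/

import Mathlib

open Filter Set

/-- `repCount A n` is the number of representations of `n` as `a + a'` with
`a ≤ a'` and `a, a' ∈ A`. -/
noncomputable def repCount (A : Set ℤ) (n : ℤ) : ℕ :=
  {p : ℤ × ℤ | p.1 ∈ A ∧ p.2 ∈ A ∧ p.1 ≤ p.2 ∧ p.1 + p.2 = n}.ncard

/-- `A` is a unique representation basis of `ℤ` if `r_A(n) = 1` for all `n`. -/
def IsUniqueRepBasis (A : Set ℤ) : Prop := ∀ n : ℤ, repCount A n = 1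

/-- `countIn A y x` is the number of elements of `A` in the real interval `[y, x]`. -/
noncomputable def countIn (A : Set ℤ) (y x : ℝ) : ℕ :=
  {a : ℤ | a ∈ A ∧ y ≤ (a : ℝ) ∧ (a : ℝ) ≤ x}.ncard

/-!
Ruzsa's dense Sidon sets: in the additive group `𝔽_p^× × 𝔽_p` the graph `{(u, u)}` is Sidon, because
the sum and the product of two field elements determine them as the roots of a quadratic. The group
is cyclic of order `p (p - 1)`, so this gives `p - 1` integers in `[0, p (p - 1))` forming a Sidon
set.

Given any finite Sidon set `A`, at most `|A| (|A| - 1)` elements of a Sidon set `B` are responsible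
for coincidences in `A + B`. Deleting them and translating the rest just beyond `A` enlarges `A` to
a Sidon set with about `p` elements in `[-2p², 2p²]`, and `p = √(x / 2)` for `x = 2p²`. Such steps
alternate with the adjunction of a pair `{u, n - u}`, `u` large, which represents a prescribed
integer `n`; the union over all steps is the required basis.
-/

open scoped Finset Pointwise

/-- A set is Sidon if the sum of two of its elements determines them up to order. Equal summands
are allowed, so for a set of integers this is uniqueness, without existence, in a unique
representation basis. -/
def IsSidon {G : Type*} [Add G] (S : Set G) : Prop :=
  ∀ ⦃a⦄, a ∈ S → ∀ ⦃b⦄, b ∈ S → ∀ ⦃c⦄, c ∈ S → ∀ ⦃d⦄, d ∈ S →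
    a + b = c + d → (a = c ∧ b = d) ∨ (a = d ∧ b = c)

theorem isSidon_empty {G : Type*} [Add G] : IsSidon (∅ : Set G) :=
  fun _ ha => ha.elim

theorem IsSidon.mono {G : Type*} [Add G] {S T : Set G} (hT : IsSidon T) (h : S ⊆ T) : IsSidon S :=
  fun _ ha _ hb _ hc _ hd => hT (h ha) (h hb) (h hc) (h hd)

theorem isSidon_range_units_prodMk {R : Type*} [CommRing R] [NoZeroDivisors R] :
    IsSidon (range fun u : Rˣ => (Additive.ofMul u, (u : R))) := by
  rintro _ ⟨u, rfl⟩ _ ⟨v, rfl⟩ _ ⟨w, rfl⟩ _ ⟨z, rfl⟩ h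
  have hmul : u * v = w * z := congrArg Prod.fst h
  have hadd : (u : R) + v = w + z := congrArg Prod.snd h
  -- `u` is a root of `(X - w) * (X - z) = (X - u) * (X - v)`.
  have hroot : ((u : R) - w) * (u - z) = 0 := by
    have hmul' : (u : R) * v = w * z := congrArg Units.val hmul
    linear_combination (u : R) * hadd - hmul'
  rcases mul_eq_zero.1 hroot with huw | huz
  · obtain rfl : u = w := Units.ext (sub_eq_zero.1 huw)
    obtain rfl : v = z := mul_left_cancel hmul
    exact .inl ⟨rfl, rfl⟩
  · obtain rfl : u = z := Units.ext (sub_eq_zero.1 huz)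
    obtain rfl : v = w := mul_left_cancel (hmul.trans (mul_comm w u))
    exact .inr ⟨rfl, rfl⟩

theorem IsSidon.image_of_leftInverse {G H : Type*} [Add G] [Add H] {S : Set G}
    (hS : IsSidon S) {f : G → H} {π : H →ₙ+ G} (hπ : Function.LeftInverse π f) :
    IsSidon (f '' S) := by
  rintro _ ⟨a, ha, rfl⟩ _ ⟨b, hb, rfl⟩ _ ⟨c, hc, rfl⟩ _ ⟨d, hd, rfl⟩ h
  have hsum : a + b = c + d := by
    simpa only [map_add, hπ a, hπ b, hπ c, hπ d] using congrArg π h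
  exact (hS ha hb hc hd hsum).imp (.imp (congrArg f) (congrArg f))
    (.imp (congrArg f) (congrArg f))

theorem IsSidon.exists_int_of_isAddCyclic {G : Type*} [AddCommGroup G] [Finite G]
    [hG : IsAddCyclic G] {S : Finset G} (hS : IsSidon (S : Set G)) :
    ∃ B : Finset ℤ, IsSidon (B : Set ℤ) ∧ (B : Set ℤ) ⊆ Ico 0 (Nat.card G : ℤ) ∧ #B = #S := by
  classical
  have : NeZero (Nat.card G) := ⟨Nat.card_pos.ne'⟩
  let e : ZMod (Nat.card G) ≃+ G := zmodAddCyclicAddEquiv hG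
  let f : G → ℤ := fun g => (e.symm g).val
  let π : ℤ →+ G := e.toAddMonoidHom.comp (Int.castAddHom _)
  have hπ : Function.LeftInverse π f := fun g => by simp [π, f]
  refine ⟨S.image f, ?_, ?_, Finset.card_image_of_injective S hπ.injective⟩
  · rw [Finset.coe_image]
    exact hS.image_of_leftInverse (π := (π : ℤ →ₙ+ G)) hπ
  · rw [Finset.coe_image, image_subset_iff]
    exact fun g _ => ⟨Int.natCast_nonneg _, Int.ofNat_lt.2 (ZMod.val_lt _)⟩

theorem exists_isSidon_subset_Ico_of_prime {p : ℕ} (hp : p.Prime) :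
    ∃ B : Finset ℤ, IsSidon (B : Set ℤ) ∧ (B : Set ℤ) ⊆ Ico 0 ((p - 1) * p : ℤ) ∧
      #B = p - 1 := by
  have : Fact p.Prime := ⟨hp⟩
  let graph : (ZMod p)ˣ ↪ Additive (ZMod p)ˣ × ZMod p :=
    ⟨fun u => (Additive.ofMul u, u), fun _ _ h => congrArg Prod.fst h⟩
  have hgraph : IsSidon (Finset.univ.map graph : Set (Additive (ZMod p)ˣ × ZMod p)) := by
    rw [Finset.coe_map, Finset.coe_univ, image_univ]
    exact isSidon_range_units_prodMk
  have hcard : Nat.card (Additive (ZMod p)ˣ) = p - 1 := by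
    rw [Nat.card_congr Additive.toMul, Nat.card_eq_fintype_card, ZMod.card_units]
  have hcoprime : (Nat.card (Additive (ZMod p)ˣ)).Coprime (Nat.card (ZMod p)) := by
    rw [hcard, Nat.card_zmod, Nat.coprime_self_sub_left hp.one_le]
    exact Nat.coprime_one_left p
  have : IsAddCyclic (Additive (ZMod p)ˣ × ZMod p) :=
    AddGroup.isAddCyclic_prod_iff.2 ⟨inferInstance, inferInstance, hcoprime⟩
  obtain ⟨B, hB, hB_subset, hB_card⟩ := hgraph.exists_int_of_isAddCyclic
  refine ⟨B, hB, ?_, ?_⟩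
  · simpa only [Nat.card_prod, hcard, Nat.card_zmod, Nat.cast_mul, Nat.cast_pred hp.pos]
      using hB_subset
  · rw [hB_card, Finset.card_map, Finset.card_univ, ZMod.card_units]

theorem add_ne_add_of_disjoint {G : Type*} [Add G] {S T U V : Set G}
    (h : Disjoint (S + T) (U + V)) ⦃a b c d : G⦄ (ha : a ∈ S) (hb : b ∈ T) (hc : c ∈ U)
    (hd : d ∈ V) : a + b ≠ c + d :=
  h.ne_of_mem (add_mem_add ha hb) (add_mem_add hc hd)

theorem IsSidon.union {G : Type*} [AddCommMagma G] {A C : Set G} (hA : IsSidon A)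
    (hC : IsSidon C) (hAC : InjOn (fun q : G × G => q.1 + q.2) (A ×ˢ C))
    (hAA_AC : Disjoint (A + A) (A + C)) (hAA_CC : Disjoint (A + A) (C + C))
    (hAC_CC : Disjoint (A + C) (C + C)) : IsSidon (A ∪ C) := by
  have mixed {a c a' c' : G} (ha : a ∈ A) (hc : c ∈ C) (ha' : a' ∈ A) (hc' : c' ∈ C)
      (h : a + c = a' + c') : a = a' ∧ c = c' :=
    Prod.ext_iff.1 (hAC (mk_mem_prod ha hc) (mk_mem_prod ha' hc') h)
  have ne_AA_AC := add_ne_add_of_disjoint hAA_AC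
  have ne_AA_CC := add_ne_add_of_disjoint hAA_CC
  have ne_AC_CC := add_ne_add_of_disjoint hAC_CC
  rintro a (ha | ha) b (hb | hb) c (hc | hc) d (hd | hd) h
  all_goals
    first
    | exact hA ha hb hc hd h
    | exact hC ha hb hc hd h
    | grind only [add_comm]

theorem IsSidon.vadd {G : Type*} [AddCancelCommMonoid G] {S : Set G} (hS : IsSidon S) (t : G) :
    IsSidon (t +ᵥ S) := by
  rintro _ ⟨a, ha, rfl⟩ _ ⟨b, hb, rfl⟩ _ ⟨c, hc, rfl⟩ _ ⟨d, hd, rfl⟩ h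
  have hsum : a + b = c + d := by
    simpa only [vadd_eq_add, add_add_add_comm t, add_right_inj] using h
  simpa only [vadd_eq_add, add_right_inj] using hS ha hb hc hd hsum

theorem IsSidon.exists_subset_injOn_add {G : Type*} [AddCancelCommMonoid G]
    (A : Finset G) {B : Finset G} (hB : IsSidon (B : Set G)) :
    ∃ B' ⊆ B, InjOn (fun q : G × G => q.1 + q.2) ((A : Set G) ×ˢ (B' : Set G)) ∧
      #B ≤ #B' + #A.offDiag := by
  classical
  let collides : G → G × G → Prop := fun b q => ∃ b' ∈ B, q.1 + b = q.2 + b'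
  let good : G → Prop := fun b => ∀ q ∈ A.offDiag, ¬ collides b q
  refine ⟨B.filter good, Finset.filter_subset _ _, ?_, ?_⟩
  · rintro ⟨a, b⟩ ⟨ha, hb⟩ ⟨a', b'⟩ ⟨ha', hb'⟩ (h : a + b = a' + b')
    obtain rfl : a = a' := by
      by_contra hne
      exact (Finset.mem_filter.1 hb).2 (a, a') (Finset.mem_offDiag.2 ⟨ha, ha', hne⟩)
        ⟨b', Finset.filter_subset _ _ hb', h⟩
    rw [add_left_cancel h]
  · rw [← Finset.card_filter_add_card_filter_not (s := B) good]
    gcongr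
    refine Finset.card_le_card_of_forall_subsingleton collides ?_ ?_
    · intro b hb
      simpa [good, Finset.mem_offDiag, and_assoc] using (Finset.mem_filter.1 hb).2
    -- If `(a, a')` collides with both `b` and `c`, then `b - b' = a' - a = c - c'`.
    · rintro ⟨a, a'⟩ haa' b ⟨hb, b', hb', hbb'⟩ c ⟨hc, c', hc', hcc'⟩
      have hsum : b + c' = c + b' := by grind
      rcases hB (Finset.filter_subset _ _ hb) hc' (Finset.filter_subset _ _ hc) hb' hsum with h | h
      · exact h.1
      · obtain rfl : b = b' := h.1
        exact absurd (add_right_cancel hbb') (Finset.mem_offDiag.1 haa').2.2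

theorem exists_nat_subset_Icc_neg (A : Finset ℤ) : ∃ m : ℕ, (A : Set ℤ) ⊆ Icc (-m : ℤ) m := by
  refine ⟨A.sup Int.natAbs, fun a ha => ?_⟩
  have : a.natAbs ≤ A.sup Int.natAbs := Finset.le_sup (f := Int.natAbs) ha
  constructor <;> omega

theorem IsSidon.exists_superset_mem_add {A : Finset ℤ} (hA : IsSidon (A : Set ℤ)) (n : ℤ) :
    ∃ A' : Finset ℤ, A ⊆ A' ∧ IsSidon (A' : Set ℤ) ∧ n ∈ (A' : Set ℤ) + (A' : Set ℤ) := by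
  by_cases hn : n ∈ (A : Set ℤ) + (A : Set ℤ)
  · exact ⟨A, subset_rfl, hA, hn⟩
  obtain ⟨m, hm⟩ := exists_nat_subset_Icc_neg (insert n A)
  have hbound : ∀ a ∈ A, -(m : ℤ) ≤ a ∧ a ≤ m := fun a ha => hm (by simp [ha])
  have hnm : -(m : ℤ) ≤ n ∧ n ≤ m := hm (by simp)
  obtain ⟨u, _⟩ : ∃ u : ℤ, u = 5 * m + 1 := ⟨_, rfl⟩
  refine ⟨A ∪ {u, n - u}, Finset.subset_union_left, ?_,
    u, by simp, n - u, by simp, add_sub_cancel u n⟩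
  rw [Finset.coe_union, Finset.coe_pair]
  apply hA.union
  · rintro a (rfl | rfl) b (rfl | rfl) c (rfl | rfl) d (rfl | rfl) h <;> omega
  · rintro ⟨a, c⟩ ⟨ha, hc⟩ ⟨a', c'⟩ ⟨ha', hc'⟩ (h : a + c = a' + c')
    have := hbound a ha
    have := hbound a' ha'
    rcases hc with rfl | rfl <;> rcases hc' with rfl | rfl <;> grind
  · rw [disjoint_left]
    rintro _ ⟨a, ha, b, hb, rfl⟩ ⟨a', ha', c, rfl | rfl, h : a' + _ = a + b⟩
    all_goals linarith [hbound a ha, hbound b hb, hbound a' ha']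
  · rw [disjoint_left]
    rintro _ ⟨a, ha, b, hb, rfl⟩ ⟨c, hc, d, hd, h : c + d = a + b⟩
    have := hbound a ha
    have := hbound b hb
    have : a + b ≠ n := fun h => hn ⟨a, ha, b, hb, h⟩
    rcases hc with rfl | rfl <;> rcases hd with rfl | rfl <;> omega
  · rw [disjoint_left]
    rintro _ ⟨a, ha, b, hb, rfl⟩ ⟨c, hc, d, hd, h : c + d = a + b⟩
    have := hbound a ha
    rcases hb with rfl | rfl <;> rcases hc with rfl | rfl <;> rcases hd with rfl | rfl <;> omega

-- The shift is chosen so that `A + A` lies below `A + C`, which lies below `C + C`, for the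
-- translate `C` of `B`.
theorem IsSidon.union_vadd {A B : Set ℤ} (hA : IsSidon A) (hB : IsSidon B) {m N : ℤ}
    (hAm : A ⊆ Icc (-m) m) (hBN : B ⊆ Ico 0 N)
    (hAB : InjOn (fun q : ℤ × ℤ => q.1 + q.2) (A ×ˢ B)) :
    IsSidon (A ∪ ((N + 3 * m) +ᵥ B)) := by
  apply hA.union (hB.vadd _)
  · rintro ⟨a, _⟩ ⟨ha, b, hb, rfl⟩ ⟨a', _⟩ ⟨ha', b', hb', rfl⟩ h
    have hsum : a + b = a' + b' := by simpa [add_left_comm _ (N + 3 * m)] using h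
    obtain ⟨rfl, rfl⟩ := Prod.ext_iff.1 (hAB (mk_mem_prod ha hb) (mk_mem_prod ha' hb') hsum)
    rfl
  · rw [disjoint_left]
    rintro _ ⟨a, ha, a', ha', rfl⟩ ⟨a'', ha'', _, ⟨b, hb, rfl⟩, h⟩
    simp only [vadd_eq_add] at h
    linarith [(hAm ha).2, (hAm ha').2, (hAm ha'').1, (hBN hb).1, (hBN hb).2]
  · rw [disjoint_left]
    rintro _ ⟨a, ha, a', ha', rfl⟩ ⟨_, ⟨b, hb, rfl⟩, _, ⟨b', hb', rfl⟩, h⟩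
    simp only [vadd_eq_add] at h
    linarith [(hAm ha).1, (hAm ha).2, (hAm ha').2, (hBN hb).1, (hBN hb).2, (hBN hb').1]
  · rw [disjoint_left]
    rintro _ ⟨a, ha, _, ⟨b, hb, rfl⟩, rfl⟩ ⟨_, ⟨c, hc, rfl⟩, _, ⟨d, hd, rfl⟩, h⟩
    simp only [vadd_eq_add] at h
    linarith [(hAm ha).1, (hAm ha).2, (hBN hb).2, (hBN hc).1, (hBN hd).1]

theorem countIn_mono {A A' : Set ℤ} (h : A ⊆ A') (y x : ℝ) : countIn A y x ≤ countIn A' y x := by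
  refine ncard_le_ncard (fun a ha => ⟨h ha.1, ha.2⟩) ?_
  exact (finite_Icc ⌈y⌉ ⌊x⌋).subset fun a ha => ⟨Int.ceil_le.2 ha.2.1, Int.le_floor.2 ha.2.2⟩

theorem card_eq_countIn {A : Finset ℤ} {y x : ℝ} (h : ∀ a ∈ A, y ≤ a ∧ a ≤ x) :
    #A = countIn A y x := by
  rw [← ncard_coe_finset, countIn]
  congr 1
  ext a
  exact ⟨fun ha => ⟨ha, h a ha⟩, And.left⟩

theorem IsSidon.exists_superset_card_le_countIn {A B : Finset ℤ} (hA : IsSidon (A : Set ℤ))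
    (hB : IsSidon (B : Set ℤ)) {m N : ℤ} {x : ℝ} (hm : 0 ≤ m)
    (hAm : (A : Set ℤ) ⊆ Icc (-m) m) (hBN : (B : Set ℤ) ⊆ Ico 0 N)
    (hx : 2 * N + 3 * m ≤ x) :
    ∃ A' : Finset ℤ, A ⊆ A' ∧ IsSidon (A' : Set ℤ) ∧
      #B ≤ countIn A' (-x) x + #A.offDiag := by
  obtain ⟨B', hB'B, hinj, hcard⟩ := hB.exists_subset_injOn_add A
  let C : Finset ℤ := (N + 3 * m) +ᵥ B'
  have hCx : ∀ c ∈ C, -x ≤ c ∧ c ≤ x := by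
    intro c hc
    obtain ⟨b, hb, rfl⟩ := Finset.mem_vadd_finset.1 hc
    obtain ⟨hb0, hbN⟩ := hBN (hB'B hb)
    have : (0 : ℝ) ≤ m := Int.cast_nonneg hm
    have : (0 : ℝ) ≤ b := Int.cast_nonneg hb0
    have : (b : ℝ) < N := Int.cast_lt.2 hbN
    push_cast [vadd_eq_add]
    constructor <;> linarith
  refine ⟨A ∪ C, Finset.subset_union_left, ?_, hcard.trans ?_⟩
  · rw [Finset.coe_union, Finset.coe_vadd_finset]
    exact hA.union_vadd (hB.mono hB'B) hAm (Subset.trans hB'B hBN) hinj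
  · gcongr
    calc #B' = #C := (Finset.card_vadd_finset _ _).symm
      _ = countIn C (-x) x := card_eq_countIn hCx
      _ ≤ countIn (A ∪ C : Finset ℤ) (-x) x := countIn_mono (by simp) _ _

theorem IsSidon.exists_superset_sqrt_sub_le_countIn {φ : ℕ → ℝ} (hφ : Tendsto φ atTop atTop)
    {A : Finset ℤ} (hA : IsSidon (A : Set ℤ)) (k : ℕ) :
    ∃ A' : Finset ℤ, A ⊆ A' ∧ IsSidon (A' : Set ℤ) ∧
      ∃ x : ℕ, k < x ∧ √(x / 2) - φ x ≤ countIn A' (-x) x := by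
  obtain ⟨m, hAm⟩ := exists_nat_subset_Icc_neg A
  obtain ⟨X, hX⟩ := eventually_atTop.1 (hφ.eventually_ge_atTop ((#A.offDiag : ℝ) + 1))
  obtain ⟨p, hp_ge, hp⟩ := Nat.exists_infinite_primes (2 * m + X + k + 1)
  obtain ⟨B, hB, hBN, hBcard⟩ := exists_isSidon_subset_Ico_of_prime hp
  have hp_sq : p ≤ 2 * p ^ 2 := by nlinarith
  have hrange : 2 * ((p - 1) * p : ℤ) + 3 * (m : ℤ) ≤ ((2 * p ^ 2 : ℕ) : ℝ) := by
    have : 2 * (m : ℝ) ≤ p := by exact_mod_cast (by omega : 2 * m ≤ p)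
    push_cast
    linarith
  obtain ⟨A', hAA', hA', hcount⟩ :=
    hA.exists_superset_card_le_countIn hB (Int.natCast_nonneg m) hAm hBN hrange
  refine ⟨A', hAA', hA', 2 * p ^ 2, by omega, ?_⟩
  have hsqrt : √((2 * p ^ 2 : ℕ) / 2) = p := by
    rw [Nat.cast_mul, Nat.cast_ofNat, mul_div_cancel_left₀ _ two_ne_zero, Nat.cast_pow,
      Real.sqrt_sq p.cast_nonneg]
  have hφ_ge : (#A.offDiag : ℝ) + 1 ≤ φ (2 * p ^ 2) := hX _ (by omega)
  have hp_le : (p : ℝ) ≤ countIn A' (-(2 * p ^ 2 : ℕ)) (2 * p ^ 2 : ℕ) + #A.offDiag + 1 := by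
    rw [hBcard, tsub_le_iff_right] at hcount
    exact_mod_cast hcount
  rw [hsqrt]
  linarith

theorem IsSidon.iUnion {G ι : Type*} [Add G] {s : ι → Set G} (hdir : Directed (· ⊆ ·) s)
    (hs : ∀ i, IsSidon (s i)) : IsSidon (⋃ i, s i) := by
  intro a ha b hb c hc d hd h
  obtain ⟨i, hi⟩ := mem_iUnion.1 ha
  obtain ⟨j, hj⟩ := mem_iUnion.1 hb
  obtain ⟨k, hk⟩ := mem_iUnion.1 hc
  obtain ⟨l, hl⟩ := mem_iUnion.1 hd
  obtain ⟨u, hiu, hju⟩ := hdir i j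
  obtain ⟨v, hkv, hlv⟩ := hdir k l
  obtain ⟨w, huw, hvw⟩ := hdir u v
  exact hs w (huw (hiu hi)) (huw (hju hj)) (hvw (hkv hk)) (hvw (hlv hl)) h

theorem IsSidon.isUniqueRepBasis {A : Set ℤ} (hA : IsSidon A) (hbasis : A + A = univ) :
    IsUniqueRepBasis A := by
  intro n
  obtain ⟨a, ha, b, hb, hle, rfl⟩ : ∃ a ∈ A, ∃ b ∈ A, a ≤ b ∧ a + b = n := by
    obtain ⟨a, ha, b, hb, hab⟩ : n ∈ A + A := hbasis ▸ mem_univ n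
    rcases le_total a b with hle | hle
    · exact ⟨a, ha, b, hb, hle, hab⟩
    · exact ⟨b, hb, a, ha, hle, (add_comm b a).trans hab⟩
  refine ncard_eq_one.2 ⟨(a, b), Subset.antisymm ?_ (singleton_subset_iff.2 ⟨ha, hb, hle, rfl⟩)⟩
  rintro ⟨c, d⟩ ⟨hc, hd, hcd, h⟩
  rcases hA hc hd ha hb h with ⟨rfl, rfl⟩ | ⟨rfl, rfl⟩
  · rfl
  · exact Prod.ext (le_antisymm hcd hle) (le_antisymm hle hcd)

theorem exists_monotone_seq_of_forall_exists_ge {α : Type*} [Preorder α] {P : α → Prop}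
    {Q : ℕ → α → Prop} {a₀ : α} (h₀ : P a₀) (hstep : ∀ k a, P a → ∃ b, a ≤ b ∧ P b ∧ Q k b) :
    ∃ s : ℕ → α, Monotone s ∧ (∀ k, P (s k)) ∧ ∀ k, Q k (s (k + 1)) := by
  choose next hle hP hQ using hstep
  let s : ℕ → {a // P a} :=
    Nat.rec ⟨a₀, h₀⟩ fun k a => ⟨next k a.1 a.2, hP k a.1 a.2⟩
  exact ⟨fun k => (s k).1, monotone_nat_of_le_succ fun k => hle k _ (s k).2, fun k => (s k).2,
    fun k => hQ k _ (s k).2⟩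

theorem exists_urb_ge_sqrt_infinitely_often_general {φ : ℕ → ℝ} (hφ : Tendsto φ atTop atTop) :
    ∃ A : Set ℤ, IsUniqueRepBasis A ∧
      {x : ℕ | 0 < x ∧ √(x / 2) - φ x ≤ countIn A (-x) x}.Infinite := by
  obtain ⟨e, he⟩ := exists_surjective_nat ℤ
  have h_empty : IsSidon ((∅ : Finset ℤ) : Set ℤ) := Finset.coe_empty (α := ℤ) ▸ isSidon_empty
  have hstep (k : ℕ) (A : Finset ℤ) (hA : IsSidon (A : Set ℤ)) :
      ∃ A' : Finset ℤ, A ≤ A' ∧ IsSidon (A' : Set ℤ) ∧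
        (e k ∈ (A' : Set ℤ) + (A' : Set ℤ) ∧
          ∃ x : ℕ, k < x ∧ √(x / 2) - φ x ≤ countIn A' (-x) x) := by
    obtain ⟨A₁, hAA₁, hA₁, hmem⟩ := hA.exists_superset_mem_add (e k)
    obtain ⟨A₂, hA₁A₂, hA₂, hcount⟩ := hA₁.exists_superset_sqrt_sub_le_countIn hφ k
    exact ⟨A₂, hAA₁.trans hA₁A₂, hA₂, Set.add_subset_add hA₁A₂ hA₁A₂ hmem, hcount⟩
  obtain ⟨S, hmono, hSidon, hS⟩ := exists_monotone_seq_of_forall_exists_ge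
    (P := fun A : Finset ℤ => IsSidon (A : Set ℤ)) h_empty hstep
  have hdir : Directed (· ⊆ ·) fun k => (S k : Set ℤ) :=
    Monotone.directed_le fun i j hij => Finset.coe_subset.2 (hmono hij)
  have hsub (k : ℕ) : (S k : Set ℤ) ⊆ ⋃ k, (S k : Set ℤ) := subset_iUnion (S · : ℕ → Set ℤ) k
  refine ⟨⋃ k, (S k : Set ℤ), (IsSidon.iUnion hdir hSidon).isUniqueRepBasis ?_, ?_⟩
  · refine eq_univ_of_forall (he.forall.2 fun k => ?_)
    exact Set.add_subset_add (hsub _) (hsub _) (hS k).1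
  · refine infinite_of_forall_exists_gt fun k => ?_
    obtain ⟨x, hkx, hx⟩ := (hS k).2
    exact ⟨x, ⟨by omega, hx.trans (by exact_mod_cast countIn_mono (hsub _) _ _)⟩, hkx⟩

/-- For every `ε > 0` there exists a unique representation basis `A` such that
`A(-x,x) ≥ (√2/2 − ε) √x` for infinitely many positive integers `x`. -/
theorem exists_urb_ge_sqrt_infinitely_often (ε : ℝ) (hε : 0 < ε) :
    ∃ A : Set ℤ, IsUniqueRepBasis A ∧
      {x : ℕ | 0 < x ∧
        (Real.sqrt 2 / 2 - ε) * Real.sqrt x ≤ (countIn A (-(x : ℝ)) (x : ℝ) : ℝ)}.Infinite := by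
  have hφ : Tendsto (fun x : ℕ => ε * √x) atTop atTop :=
    (Real.tendsto_sqrt_atTop.comp tendsto_natCast_atTop_atTop).const_mul_atTop hε
  have hsqrt (x : ℕ) : √((x : ℝ) / 2) - ε * √x = (√2 / 2 - ε) * √x := by
    rw [Real.sqrt_div' _ zero_le_two, sub_mul, Real.sqrt_div_self', one_div_mul_eq_div]
  simpa only [hsqrt] using exists_urb_ge_sqrt_infinitely_often_general hφ
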